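/- Let K_i ⊆ ℝ^{d_i} (i = 1, …, n) be convex bodies such that at least n − 1 of them are tightly covered (i.e., there is an index i₀ such that K_i is tightly covered for every i ≠ i₀). Then for every 0 < λ < 1, N_λ(K_1 × ⋯ × K_n) = ∏_{i=1}^n N_λ(K_i). -/

import Mathlib

open Set Pointwise

section Defs

variable {V : Type*} [NormedAddCommGroup V] [NormedSpace ℝ V]

/-- A convex body: compact, convex, with nonempty interior. -/
def IsConvexBody (K : Set V) : Prop :=
  IsCompact K ∧ Convex ℝ K ∧ (interior K).Nonempty

/-- `K` can be covered by `m` homothets of ratio `lam`. -/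
def CoversWith (K : Set V) (lam : ℝ) (m : ℕ) : Prop :=
  ∃ t : Fin m → V, K ⊆ ⋃ i, (fun x => lam • x + t i) '' K

/-- The `m`-covering number `γ_m(K)`. -/
noncomputable def gammaC (m : ℕ) (K : Set V) : ℝ :=
  sInf {lam : ℝ | 0 < lam ∧ CoversWith K lam m}

/-- The covering index `coin(K)`. -/
noncomputable def coin (K : Set V) : ℝ :=
  sInf {r : ℝ | ∃ m : ℕ, 0 < m ∧ gammaC m K ≤ 1 / 2 ∧ r = (m : ℝ) / (1 - gammaC m K)}

/-- The weak covering index `wcoin(K)`. -/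
noncomputable def wcoin (K : Set V) : ℝ :=
  sInf {r : ℝ | ∃ m : ℕ, 0 < m ∧ gammaC m K < 1 ∧ r = (m : ℝ) / (1 - gammaC m K)}

/-- `N_λ(K)`: the least number of translates of `λ • K` needed to cover `K`. -/
noncomputable def covN (lam : ℝ) (K : Set V) : ℕ :=
  sInf {n : ℕ | CoversWith K lam n}

/-- A convex body is tightly covered if for every `0 < λ < 1` it contains `N_λ(K)`
points no two of which lie in a common homothet `λ • K + t`. -/
def TightlyCovered (K : Set V) : Prop :=
  ∀ lam : ℝ, 0 < lam → lam < 1 →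
    ∃ p : Fin (covN lam K) → V, (∀ i, p i ∈ K) ∧
      ∀ i j, i ≠ j → ∀ t : V,
        ¬(p i ∈ (fun x => lam • x + t) '' K ∧ p j ∈ (fun x => lam • x + t) '' K)

/-- The covering parameter `C(K)` of Swanepoel. -/
noncomputable def covParam (K : Set V) : ℝ :=
  sInf {r : ℝ | ∃ k : ℕ, ∃ lam : Fin k → ℝ, ∃ t : Fin k → V,
    (∀ i, 0 < lam i ∧ lam i < 1) ∧
    (K ⊆ ⋃ i, (fun x => lam i • x + t i) '' K) ∧
    r = ∑ i, 1 / (1 - lam i)}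

/-- The (multiplicative) Banach–Mazur distance. -/
noncomputable def distBM {d : ℕ} (K L : Set (Fin d → ℝ)) : ℝ :=
  sInf {δ : ℝ | 1 ≤ δ ∧ ∃ T : (Fin d → ℝ) ≃ₗ[ℝ] (Fin d → ℝ), ∃ a ∈ K, ∃ b ∈ L,
    (fun x => x - b) '' L ⊆ T '' ((fun x => x - a) '' K) ∧
    T '' ((fun x => x - a) '' K) ⊆ δ • ((fun x => x - b) '' L)}

end Defs

theorem coversWith_of_fintype {V : Type*} [NormedAddCommGroup V] [NormedSpace ℝ V]
    {K : Set V} {lam : ℝ} {ι : Type*} [Fintype ι] (t : ι → V)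
    (h : K ⊆ ⋃ i, (fun x => lam • x + t i) '' K) : CoversWith K lam (Fintype.card ι) := by
  refine ⟨fun k => t ((Fintype.equivFin ι).symm k), fun x hx => ?_⟩
  obtain ⟨i, hi⟩ := Set.mem_iUnion.1 (h hx)
  exact Set.mem_iUnion.2 ⟨Fintype.equivFin ι i, by simpa using hi⟩

theorem coversWith_covN {V : Type*} [NormedAddCommGroup V] [NormedSpace ℝ V]
    {K : Set V} (hK : IsConvexBody K) {lam : ℝ} (h0 : 0 < lam) :
    CoversWith K lam (covN lam K) := by
  apply Nat.sInf_mem (s := {n : ℕ | CoversWith K lam n})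
  obtain ⟨hc, -, c, hcK⟩ := hK
  obtain ⟨s, hs⟩ := hc.elim_finite_subcover
    (fun t : V => (fun y => lam⁻¹ • (y - t)) ⁻¹' interior K)
    (fun t => isOpen_interior.preimage (by fun_prop))
    (fun x _ => Set.mem_iUnion.2 ⟨x - lam • c, by
      simpa [smul_smul, inv_mul_cancel₀ h0.ne'] using hcK⟩)
  refine ⟨_, coversWith_of_fintype (ι := s) (fun t => (t : V)) fun x hx => ?_⟩
  obtain ⟨t, ht, hxt⟩ := Set.mem_iUnion₂.1 (hs hx)
  exact Set.mem_iUnion.2 ⟨⟨t, ht⟩, _, interior_subset hxt, by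
    simp [smul_smul, mul_inv_cancel₀ h0.ne']⟩

/-- covering numbers of direct vector sums multiply when `n - 1`
of the bodies are tightly covered. -/
theorem covN_directSum (n : ℕ) (d : Fin n → ℕ)
    (K : ∀ i, Set (Fin (d i) → ℝ)) (hK : ∀ i, IsConvexBody (K i))
    (i₀ : Fin n) (htight : ∀ i, i ≠ i₀ → TightlyCovered (K i))
    (lam : ℝ) (h0 : 0 < lam) (h1 : lam < 1) :
    covN lam (Set.univ.pi K) = ∏ i, covN lam (K i) := by
  classical
  have hup : CoversWith (Set.univ.pi K) lam (∏ i, covN lam (K i)) := by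
    choose t ht using fun i => coversWith_covN (hK i) h0
    have := coversWith_of_fintype (K := Set.univ.pi K) (lam := lam)
      (ι := ∀ i, Fin (covN lam (K i))) (fun f i => t i (f i)) (fun x hx => by
        have h : ∀ i, ∃ k, ∃ y ∈ K i, lam • y + t i k = x i := fun i => by
          simpa using ht i (hx i (Set.mem_univ i))
        choose f y hy hyx using h
        exact Set.mem_iUnion.2 ⟨f, y, fun i _ => hy i, funext fun i => by simpa using hyx i⟩)
    simpa using this
  refine le_antisymm (Nat.sInf_le hup) ?_
  obtain ⟨t, ht⟩ : CoversWith (Set.univ.pi K) lam (covN lam (Set.univ.pi K)) :=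
    Nat.sInf_mem (s := {n : ℕ | CoversWith (Set.univ.pi K) lam n}) ⟨_, hup⟩
  generalize covN lam (Set.univ.pi K) = m at t ht
  choose p hpK hp using fun i : {i // i ≠ i₀} => htight i.1 i.2 lam h0 h1
  let S : (∀ i : {i // i ≠ i₀}, Fin (covN lam (K i.1))) → Finset (Fin m) := fun g =>
    Finset.univ.filter fun k => ∀ i : {i // i ≠ i₀},
      p i (g i) ∈ (fun x => lam • x + t k i.1) '' K i.1
  have hS : ∀ g, covN lam (K i₀) ≤ (S g).card := by
    intro g
    have := coversWith_of_fintype (K := K i₀) (lam := lam) (ι := S g) (fun k => t k.1 i₀)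
      (fun x hx => by
        let z : ∀ i, Fin (d i) → ℝ := fun i =>
          if h : i = i₀ then h ▸ x else p ⟨i, h⟩ (g ⟨i, h⟩)
        have hz0 : z i₀ = x := by simp [z]
        have hz1 : ∀ i : {i // i ≠ i₀}, z i.1 = p i (g i) := fun i => by simp [z, i.2]
        have hz : z ∈ Set.univ.pi K := by
          intro i _
          by_cases h : i = i₀
          · subst h; rw [hz0]; exact hx
          · rw [hz1 ⟨i, h⟩]; exact hpK ⟨i, h⟩ (g ⟨i, h⟩)
        obtain ⟨k, y, hy, hyz⟩ := Set.mem_iUnion.1 (ht hz)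
        refine Set.mem_iUnion.2 ⟨⟨k, ?_⟩, y i₀, hy i₀ (Set.mem_univ _), ?_⟩
        · simp only [S, Finset.mem_filter, Finset.mem_univ, true_and]
          intro i
          exact ⟨y i.1, hy i.1 (Set.mem_univ _), (congrFun hyz i.1).trans (hz1 i)⟩
        · exact (congrFun hyz i₀).trans hz0)
    rw [Fintype.card_coe] at this
    exact Nat.sInf_le this
  have hdisj : ∀ g ∈ (Finset.univ : Finset (∀ i : {i // i ≠ i₀}, Fin (covN lam (K i.1)))),
      ∀ g' ∈ (Finset.univ : Finset (∀ i : {i // i ≠ i₀}, Fin (covN lam (K i.1)))),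
      g ≠ g' → Disjoint (S g) (S g') := by
    intro g _ g' _ hne
    rw [Finset.disjoint_left]
    intro k hk hk'
    simp only [S, Finset.mem_filter, Finset.mem_univ, true_and] at hk hk'
    obtain ⟨i, hi⟩ := Function.ne_iff.1 hne
    exact hp i _ _ hi _ ⟨hk i, hk' i⟩
  have hcard := Finset.card_biUnion hdisj
  have hle : (Finset.univ.biUnion S).card ≤ m := by
    simpa using Finset.card_le_univ (Finset.univ.biUnion S)
  rw [hcard] at hle
  have hge := Finset.sum_le_sum (s := Finset.univ) fun g _ => hS g
  rw [Finset.sum_const, Finset.card_univ, Fintype.card_pi] at hge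
  simp only [Fintype.card_fin, smul_eq_mul] at hge
  rw [Fintype.prod_eq_mul_prod_subtype_ne (fun i => covN lam (K i)) i₀, mul_comm]
  exact hge.trans hle
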